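/- Let a ≥ 1 and for i = 1, …, k set α_i = i. For every ρ > 0 and each i there exists a positive, smooth, strictly convex, strictly decreasing function h_i : ℝ → ℝ with h_i(r) = e^{−α_i r} for r ≥ ρ and h_i(r) = e^{−a r} for r ≤ −ρ, where a = k. Moreover h_i′ < 0 < h_i″ everywhere and the ratios h_i′/h_i and h_i″/h_i are bounded away from 0 and ∞. -/

import Mathlib

theorem Real.smoothTransition_one_sub (x : ℝ) :
    Real.smoothTransition (1 - x) = 1 - Real.smoothTransition x := by
  have h := (Real.smoothTransition.pos_denom x).ne'
  have h' : expNegInvGlue (1 - x) + expNegInvGlue x ≠ 0 := by rwa [add_comm]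
  simp only [Real.smoothTransition, sub_sub_cancel]
  field_simp
  ring

/-- A smooth function increasing from `0` on `(-∞, -ρ]` to `1` on `[ρ, ∞)`, whose graph is
symmetric about `(0, 1 / 2)`. -/
theorem exists_smooth_symmetric_step {ρ : ℝ} (hρ : 0 < ρ) :
    ∃ σ : ℝ → ℝ, ContDiff ℝ (⊤ : ℕ∞) σ ∧ Monotone σ ∧ (∀ r, σ (-r) = 1 - σ r) ∧
      (∀ r, r ≤ -ρ → σ r = 0) ∧ (∀ r, ρ ≤ r → σ r = 1) := by
  refine ⟨fun r ↦ Real.smoothTransition ((r / ρ + 1) / 2), ?_, ?_, ?_, ?_, ?_⟩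
  · exact Real.smoothTransition.contDiff.comp (by fun_prop)
  · intro x y hxy
    apply Real.smoothTransition.monotone
    gcongr
  · intro r
    dsimp only
    rw [← Real.smoothTransition_one_sub]
    congr 1
    ring
  · intro r hr
    apply Real.smoothTransition.zero_of_nonpos
    have : r / ρ ≤ -1 := by rw [div_le_iff₀ hρ]; linarith
    linarith
  · intro r hr
    apply Real.smoothTransition.one_of_one_le
    have : 1 ≤ r / ρ := by rw [le_div_iff₀ hρ]; linarith
    linarith

/-- A smooth convex function equal to `max r 0` for `ρ ≤ |r|`, with bounded second derivative. -/
theorem exists_smooth_ramp {ρ : ℝ} (hρ : 0 < ρ) :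
    ∃ (S σ σ' : ℝ → ℝ) (M : ℝ), ContDiff ℝ (⊤ : ℕ∞) S ∧
      (∀ r, HasDerivAt S (σ r) r) ∧ (∀ r, HasDerivAt σ (σ' r) r) ∧
      (∀ r, 0 ≤ σ r) ∧ (∀ r, σ r ≤ 1) ∧ (∀ r, 0 ≤ σ' r) ∧ (∀ r, σ' r ≤ M) ∧
      (∀ r, r ≤ -ρ → S r = 0) ∧ (∀ r, ρ ≤ r → S r = r) := by
  obtain ⟨σ, hσ, hmono, hsymm, hzero, hone⟩ := exists_smooth_symmetric_step hρ
  have hcont : Continuous σ := hσ.continuous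
  have hint (a b : ℝ) : IntervalIntegrable σ MeasureTheory.volume a b :=
    hcont.intervalIntegrable a b
  have hS (r : ℝ) : HasDerivAt (fun r ↦ ∫ t in (-ρ)..r, σ t) (σ r) r :=
    hcont.integral_hasStrictDerivAt _ _ |>.hasDerivAt
  have hderiv_cont : Continuous (deriv σ) := hσ.continuous_deriv (by simp)
  have hsupp : HasCompactSupport (deriv σ) := by
    refine HasCompactSupport.intro (isCompact_Icc (a := -ρ) (b := ρ)) fun r hr ↦ ?_
    rcases lt_or_ge r (-ρ) with h | h
    · have : σ =ᶠ[nhds r] fun _ ↦ 0 := by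
        filter_upwards [Iio_mem_nhds h] with t ht using hzero t (le_of_lt ht)
      simp [this.deriv_eq]
    · have h' : ρ < r := by
        by_contra! h'
        exact hr ⟨h, h'⟩
      have : σ =ᶠ[nhds r] fun _ ↦ 1 := by
        filter_upwards [Ioi_mem_nhds h'] with t ht using hone t (le_of_lt ht)
      simp [this.deriv_eq]
  obtain ⟨M, hM⟩ := hsupp.exists_bound_of_continuous hderiv_cont
  have hmid : ∫ t in (-ρ)..ρ, σ t = ρ := by
    have h := intervalIntegral.integral_comp_neg (a := -ρ) (b := ρ) σ
    simp only [hsymm, neg_neg] at h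
    rw [intervalIntegral.integral_sub (by simp) (hint _ _)] at h
    simp only [intervalIntegral.integral_const, smul_eq_mul, mul_one] at h
    linarith
  refine ⟨fun r ↦ ∫ t in (-ρ)..r, σ t, σ, deriv σ, M, ?_, hS,
    fun r ↦ (hσ.differentiable (by simp) r).hasDerivAt, ?_, ?_, fun r ↦ hmono.deriv_nonneg,
    fun r ↦ (le_abs_self _).trans (hM r), ?_, ?_⟩
  · rw [contDiff_infty_iff_deriv]
    refine ⟨fun r ↦ (hS r).differentiableAt, ?_⟩
    rwa [funext fun r ↦ (hS r).deriv]
  · intro r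
    rw [← hzero (min r (-ρ)) (min_le_right _ _)]
    exact hmono (min_le_left _ _)
  · intro r
    rw [← hone (max r ρ) (le_max_right _ _)]
    exact hmono (le_max_left _ _)
  · intro r hr
    have : ∫ t in (-ρ)..r, σ t = ∫ t in (-ρ)..r, (0 : ℝ) := by
      refine intervalIntegral.integral_congr fun t ht ↦ hzero t ?_
      rw [Set.uIcc_of_ge hr] at ht
      exact ht.2
    simpa using this
  · intro r hr
    have : ∫ t in ρ..r, σ t = ∫ t in ρ..r, (1 : ℝ) := by
      refine intervalIntegral.integral_congr fun t ht ↦ hone t ?_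
      rw [Set.uIcc_of_le hr] at ht
      exact ht.1
    have hadd := intervalIntegral.integral_add_adjacent_intervals (hint (-ρ) ρ) (hint ρ r)
    simp only [intervalIntegral.integral_const, smul_eq_mul, mul_one] at this
    linarith


/-- For `a = k ≥ α_i = i` (with `1 ≤ i ≤ k`) and any `ρ > 0`, there is
a positive smooth strictly convex strictly decreasing function `h : ℝ → ℝ` equal to
`e^{-i r}` for `r ≥ ρ` and to `e^{-k r}` for `r ≤ -ρ`, with `h' < 0 < h''` everywhere
and with `-h'/h` and `h''/h` uniformly bounded away from `0` and `∞`. -/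
theorem exists_interpolating_warping_function (k : ℕ) (hk : 0 < k)
    (ρ : ℝ) (hρ : 0 < ρ) (i : ℕ) (hi1 : 1 ≤ i) (hik : i ≤ k) :
    ∃ h : ℝ → ℝ, ContDiff ℝ (⊤ : ℕ∞) h ∧ (∀ r, 0 < h r) ∧
      StrictAnti h ∧ StrictConvexOn ℝ Set.univ h ∧
      (∀ r, deriv h r < 0) ∧ (∀ r, 0 < deriv (deriv h) r) ∧
      (∀ r, ρ ≤ r → h r = Real.exp (-(i : ℝ) * r)) ∧
      (∀ r, r ≤ -ρ → h r = Real.exp (-(k : ℝ) * r)) ∧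
      ∃ c₁ c₂ : ℝ, 0 < c₁ ∧ ∀ r,
        c₁ ≤ -(deriv h r) / h r ∧ -(deriv h r) / h r ≤ c₂ ∧
        c₁ ≤ deriv (deriv h) r / h r ∧ deriv (deriv h) r / h r ≤ c₂ := by
  obtain ⟨S, σ, σ', M, hSsmooth, hS, hσ, hσ0, hσ1, hσ'0, hσ'M, hSl, hSr⟩ := exists_smooth_ramp hρ
  have hi : (1 : ℝ) ≤ i := by exact_mod_cast hi1
  have hki : (0 : ℝ) ≤ k - i := sub_nonneg.2 (by exact_mod_cast hik)
  set d : ℝ := k - i with hd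
  let h : ℝ → ℝ := fun r ↦ Real.exp (-(k : ℝ) * r + d * S r)
  let u : ℝ → ℝ := fun r ↦ k - d * σ r
  have hpos (r : ℝ) : 0 < h r := Real.exp_pos _
  have hu1 (r : ℝ) : 1 ≤ u r := by
    have := mul_le_mul_of_nonneg_left (hσ1 r) hki
    simp only [u]
    linarith
  have huk (r : ℝ) : u r ≤ k := sub_le_self _ (mul_nonneg hki (hσ0 r))
  have hh (r : ℝ) : HasDerivAt h (-(u r * h r)) r := by
    refine (((hasDerivAt_id r).const_mul (-(k : ℝ))).add ((hS r).const_mul d)).exp.congr_deriv ?_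
    change Real.exp (-(k : ℝ) * r + d * S r) * (-(k : ℝ) * 1 + d * σ r) =
      -((k - d * σ r) * Real.exp (-(k : ℝ) * r + d * S r))
    ring
  have hu (r : ℝ) : HasDerivAt u (-(d * σ' r)) r := ((hσ r).const_mul d).const_sub _
  have hderiv : deriv h = fun r ↦ -(u r * h r) := funext fun r ↦ (hh r).deriv
  have hderiv2 (r : ℝ) : deriv (deriv h) r = (u r ^ 2 + d * σ' r) * h r := by
    rw [hderiv]
    refine (((hu r).mul (hh r)).neg.congr_deriv ?_).deriv
    ring
  have hone_le (r : ℝ) : 1 ≤ u r ^ 2 + d * σ' r :=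
    le_add_of_le_of_nonneg (one_le_pow₀ (hu1 r)) (mul_nonneg hki (hσ'0 r))
  have hneg (r : ℝ) : deriv h r < 0 := by
    rw [hderiv]
    exact neg_neg_of_pos (mul_pos (one_pos.trans_le (hu1 r)) (hpos r))
  have hpos2 (r : ℝ) : 0 < deriv (deriv h) r := by
    rw [hderiv2]
    exact mul_pos (one_pos.trans_le (hone_le r)) (hpos r)
  have hsmooth : ContDiff ℝ (⊤ : ℕ∞) h := by fun_prop
  refine ⟨h, hsmooth, hpos, strictAnti_of_deriv_neg hneg,
    strictConvexOn_univ_of_deriv2_pos hsmooth.continuous hpos2, hneg, hpos2, ?_, ?_,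
    1, max k (k ^ 2 + d * M), one_pos, fun r ↦ ?_⟩
  · intro r hr
    simp only [h, hSr r hr, hd]
    ring_nf
  · intro r hr
    simp only [h, hSl r hr, mul_zero, add_zero]
  · have h1 : -(deriv h r) / h r = u r := by
      rw [hderiv, neg_neg, mul_div_cancel_right₀ _ (hpos r).ne']
    have h2 : deriv (deriv h) r / h r = u r ^ 2 + d * σ' r := by
      rw [hderiv2, mul_div_cancel_right₀ _ (hpos r).ne']
    rw [h1, h2]
    refine ⟨hu1 r, (huk r).trans (le_max_left _ _), hone_le r, le_trans ?_ (le_max_right _ _)⟩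
    have := hσ'M r
    have := hu1 r
    have := huk r
    gcongr
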